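/- arXiv:2508.10611 — 4 statements merged into one kernel-verified Lean document; each statement's English description precedes it below -/
import Mathlib

section
/- Let s and t be integers with 2 ≤ s ≤ t. There exists a constant C > 0 (depending only on s and t) such that for every integer n ≥ 2, every K_{1,s,t}-free simple graph on n vertices contains at most C · n^{3 - 1/s} · (log n)^{-1 + 1/s} triangles. -/
/-!
Write `n` for the number of vertices, `L = log n`, `μ = (n / L) ^ (1 / s)` and
`M = μ ^ (s - 1) = (n / L) ^ (1 - 1 / s)`. The number of triangles is at most the sum of the
codegrees `codeg G x y` over all adjacent ordered pairs, and this sum is shown to be `O(M n²)`.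

In a `K_{1,s,t}`-free graph the link of every vertex is `K_{s,t}`-free, so Kővári–Sós–Turán
counting applies inside links (`link_edges_le`). For a set `E` of at most `n² / L` adjacent pairs
this alone bounds the codegree sum over `E` by `O(M n²)` (`sparse_le`).

A larger set `E`, of density `p = |E| / n² > 1 / L`, contains a complete bipartite block `T × Q`
with `|T|` about `√p L` and `|Q| ≥ n ^ (3/4)` (`exists_block`, `block_size`). Consider a triangle
`x y v` with `x ∈ T`, `y ∈ Q`. If `v` has at least `s` neighbours in `T`, then it has fewer than
`t` neighbours in `Q`, so such triangles are negligible. Otherwise `v` lies in the set `F x` of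
neighbours of `x` having fewer than `s` neighbours in `T`; the sets `F x` have total size at most
`s n`, hence average size only `s n / |T|`, and `link_edges_le` applied between `F x` and `Q` in
the link of `x` yields `O(|Q| L M)` triangles in total (`block_le`). This is
`O(M / √p)` per pair of the block.

Removing blocks one at a time, the cost `M / √p` per pair is paid for by the potential
`M n √|E|`, whose initial value is at most `M n²` (`weight_le`).
-/

/-- `G` is `K_{1,s,t}`-free: there do not exist a vertex `v` and disjoint vertex sets
`S`, `T` with `|S| = s`, `|T| = t`, both not containing `v`, such that `v` is adjacent to
every vertex of `S ∪ T` and every vertex of `S` is adjacent to every vertex of `T`. -/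
def K1stFree {V : Type*} (G : SimpleGraph V) (s t : ℕ) : Prop :=
  ¬ ∃ (v : V) (S T : Finset V), Disjoint S T ∧ v ∉ S ∧ v ∉ T ∧
      S.card = s ∧ T.card = t ∧
      (∀ x ∈ S, G.Adj v x) ∧ (∀ y ∈ T, G.Adj v y) ∧
      ∀ x ∈ S, ∀ y ∈ T, G.Adj x y

open Finset

/-! ### Counting in links -/

lemma K1stFree.card_lt {V : Type*} {G : SimpleGraph V} {s t : ℕ}
    (h : K1stFree G s t) {v : V} {S T : Finset V} (hS : s ≤ S.card)
    (hvS : ∀ x ∈ S, G.Adj v x) (hvT : ∀ y ∈ T, G.Adj v y)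
    (hST : ∀ x ∈ S, ∀ y ∈ T, G.Adj x y) : T.card < t := by
  by_contra! hT
  obtain ⟨S', hS', hS'c⟩ := exists_subset_card_eq hS
  obtain ⟨T', hT', hT'c⟩ := exists_subset_card_eq hT
  refine h ⟨v, S', T', ?_, fun hv => ?_, fun hv => ?_, hS'c, hT'c,
    fun x hx => hvS x (hS' hx), fun y hy => hvT y (hT' hy),
    fun x hx y hy => hST x (hS' hx) y (hT' hy)⟩
  · rw [Finset.disjoint_left]
    exact fun x hx hx' => G.irrefl (hST x (hS' hx) x (hT' hx'))
  · exact G.irrefl (hvS v (hS' hv))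
  · exact G.irrefl (hvT v (hT' hv))

/-- Double counting of the stars with `k` leaves: if any `k` elements of `Q` have at most `B`
common neighbours in `F`, the `k`-th powers of the (slightly reduced) degrees of `F` into `Q` sum
to at most `B |Q| ^ k`. The subtraction is the truncated one. -/
lemma sum_pow_le_of_codegree_le {α β : Type*} (r : α → β → Prop)
    [∀ v y, Decidable (r v y)] (F : Finset α) (Q : Finset β) (k : ℕ) (B : ℕ)
    (hB : ∀ S ∈ powersetCard k Q, (F.filter fun v => ∀ y ∈ S, r v y).card ≤ B) :
    ∑ v ∈ F, ((Q.filter (r v)).card + 1 - k) ^ k ≤ B * Q.card ^ k := by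
  calc ∑ v ∈ F, ((Q.filter (r v)).card + 1 - k) ^ k
      ≤ ∑ v ∈ F, k.factorial * (powersetCard k (Q.filter (r v))).card := by
        refine sum_le_sum fun v _ => ?_
        rw [card_powersetCard, ← Nat.descFactorial_eq_factorial_mul_choose]
        exact Nat.pow_sub_le_descFactorial _ _
    _ = k.factorial * ∑ S ∈ powersetCard k Q, (F.filter fun v => ∀ y ∈ S, r v y).card := by
        rw [← mul_sum]
        congr 1
        have h1 := sum_card_bipartiteAbove_eq_sum_card_bipartiteBelow
          (s := F) (t := powersetCard k Q) (fun v S => ∀ y ∈ S, r v y)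
        simp only [bipartiteAbove, bipartiteBelow] at h1
        rw [← h1]
        refine sum_congr rfl fun v _ => ?_
        congr 1
        ext S
        simp only [mem_powersetCard, mem_filter, subset_iff]
        grind
    _ ≤ k.factorial * ∑ S ∈ powersetCard k Q, B := by
        gcongr with S hS
        exact hB S hS
    _ = B * (k.factorial * Q.card.choose k) := by
        rw [sum_const, card_powersetCard, smul_eq_mul]; ring
    _ ≤ B * Q.card ^ k := by
        rw [← Nat.descFactorial_eq_factorial_mul_choose]
        gcongr
        exact Nat.descFactorial_le_pow _ _

/-- The Kővári–Sós–Turán bound in the link of `x`, between `F` and `Q` (possibly overlapping).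
The usual term `|Q| |F| ^ (1 - 1 / s)` is linearized in `|F|` by means of the free parameter `μ`;
the best choice is `μ = |F| ^ (1 / s)`, but a common `μ` allows summation over several `F`. -/
lemma link_edges_le {V : Type*} [DecidableEq V] {G : SimpleGraph V} [DecidableRel G.Adj]
    {s t : ℕ} (hs : 2 ≤ s) (h : K1stFree G s t) {x : V} {F Q : Finset V}
    (hF : ∀ v ∈ F, G.Adj x v) (hQ : ∀ y ∈ Q, G.Adj x y) {μ : ℝ} (hμ : 0 < μ) :
    (∑ v ∈ F, ((Q.filter (G.Adj v)).card : ℝ)) ≤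
      s * F.card + Q.card * F.card / μ + t * Q.card * μ ^ (s - 1) := by
  obtain ⟨k, rfl⟩ : ∃ k, s = k + 1 := ⟨s - 1, by omega⟩
  simp only [Nat.add_sub_cancel]
  rcases Nat.eq_zero_or_pos Q.card with h0 | hpos
  · rw [card_eq_zero] at h0
    subst h0
    simp
    positivity
  have hq : (0 : ℝ) < Q.card := by exact_mod_cast hpos
  set q : ℝ := (Q.card : ℝ) with hqdef
  set θ : ℝ := q / μ with hθ
  have hθ0 : 0 < θ := by positivity
  have h1 : ∑ v ∈ F, ((Q.filter (G.Adj v)).card + 1 - (k + 1)) ^ (k + 1)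
      ≤ t * Q.card ^ (k + 1) := by
    apply sum_pow_le_of_codegree_le
    intro S hS
    rw [mem_powersetCard] at hS
    refine (h.card_lt (v := x) (S := S) hS.2.ge (fun y hy => hQ y (hS.1 hy)) ?_ ?_).le
    · intro y hy
      exact hF y (mem_filter.1 hy).1
    · intro y hy v hv
      exact ((mem_filter.1 hv).2 y hy).symm
  have h2 : ∑ v ∈ F, (((Q.filter (G.Adj v)).card + 1 - (k + 1) : ℕ) : ℝ) ^ (k + 1)
      ≤ t * q ^ (k + 1) := by
    rw [hqdef]
    exact_mod_cast h1
  have h3 : ∀ v ∈ F, ((Q.filter (G.Adj v)).card : ℝ) ≤ ((k + 1 : ℕ) : ℝ) + θ +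
      (((Q.filter (G.Adj v)).card + 1 - (k + 1) : ℕ) : ℝ) ^ (k + 1) / θ ^ k := by
    intro v _
    set d := (Q.filter (G.Adj v)).card
    set e := d + 1 - (k + 1) with he
    have hde : (d : ℝ) ≤ ((k + 1 : ℕ) : ℝ) + e := by
      exact_mod_cast (by omega : d ≤ k + 1 + e)
    have hee : (e : ℝ) ≤ θ + (e : ℝ) ^ (k + 1) / θ ^ k := by
      rcases le_total (e : ℝ) θ with hle | hle
      · have : 0 ≤ (e : ℝ) ^ (k + 1) / θ ^ k := by positivity
        linarith
      · have : (e : ℝ) ≤ (e : ℝ) ^ (k + 1) / θ ^ k := by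
          rw [le_div_iff₀ (by positivity), pow_succ']
          gcongr
        linarith
    linarith
  calc (∑ v ∈ F, ((Q.filter (G.Adj v)).card : ℝ))
      ≤ ∑ v ∈ F, (((k + 1 : ℕ) : ℝ) + θ +
      (((Q.filter (G.Adj v)).card + 1 - (k + 1) : ℕ) : ℝ) ^ (k + 1) / θ ^ k) := sum_le_sum h3
    _ = F.card * (((k + 1 : ℕ) : ℝ) + θ) +
        (∑ v ∈ F, (((Q.filter (G.Adj v)).card + 1 - (k + 1) : ℕ) : ℝ) ^ (k + 1)) / θ ^ k := by
        rw [sum_add_distrib, sum_const, nsmul_eq_mul, sum_div]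
    _ ≤ F.card * (((k + 1 : ℕ) : ℝ) + θ) + (t * q ^ (k + 1)) / θ ^ k := by gcongr
    _ = _ := by
        rw [hθ, div_pow]
        field_simp
        ring

/-! ### Complete bipartite blocks -/

/-- The number of common neighbours of `x` and `y`. -/
def codeg {V : Type*} [Fintype V] (G : SimpleGraph V) [DecidableRel G.Adj] (x y : V) : ℕ :=
  (univ.filter fun v => G.Adj x v ∧ G.Adj y v).card

/-- A set of pairs of density `p` contains a complete rectangle with one side of any
prescribed moderate size `a` and the other of size at least `n (p / 2) ^ a`. -/
lemma exists_block {V : Type*} [Fintype V] [DecidableEq V] [Nonempty V]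
    (E : Finset (V × V)) (a : ℕ) (ha1 : 1 ≤ a)
    (ha : 2 * a * (Fintype.card V : ℝ) ≤ E.card) :
    ∃ T Q : Finset V, T.card = a ∧ T ×ˢ Q ⊆ E ∧
      (Fintype.card V : ℝ) * (E.card / (Fintype.card V : ℝ) ^ 2 / 2) ^ a ≤ Q.card := by
  set n := Fintype.card V with hn
  have hn0 : (0 : ℝ) < n := by exact_mod_cast Fintype.card_pos
  have hEn : (E.card : ℝ) ≤ n ^ 2 := by
    have : E.card ≤ n * n := by
      simpa [hn, Fintype.card_prod] using card_le_univ E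
    rw [sq]; exact_mod_cast this
  have han : a ≤ n := by
    have h1 : 2 * (a : ℝ) * n ≤ n * n := by nlinarith
    have h2 : 2 * (a : ℝ) ≤ n := le_of_mul_le_mul_right h1 hn0
    have : (a : ℝ) ≤ n := by linarith [(Nat.cast_nonneg a : (0 : ℝ) ≤ a)]
    exact_mod_cast this
  obtain ⟨T, hT, hmax⟩ := exists_max_image (powersetCard a (univ : Finset V))
    (fun T => ((univ : Finset V).filter fun y => ∀ x ∈ T, (x, y) ∈ E).card)
    (powersetCard_nonempty.2 (by simpa using han))
  set Q := (univ : Finset V).filter fun y => ∀ x ∈ T, (x, y) ∈ E with hQ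
  refine ⟨T, Q, (mem_powersetCard.1 hT).2, ?_, ?_⟩
  · rintro ⟨x, y⟩ hxy
    rw [mem_product] at hxy
    exact (mem_filter.1 hxy.2).2 x hxy.1
  have h1 := sum_pow_le_of_codegree_le (fun y x : V => (x, y) ∈ E) univ univ a Q.card
    (fun S hS => (Eq.le (by congr)).trans (hmax S hS))
  have hsumE : ∑ y : V, ((univ.filter fun x : V => (x, y) ∈ E).card) = E.card := by
    have := card_eq_sum_card_fiberwise (f := Prod.snd) (s := E) (t := (univ : Finset V))
      (by simp)
    rw [this]
    refine sum_congr rfl fun y _ => ?_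
    refine card_bij (fun x _ => (x, y)) ?_ ?_ ?_
    · simp
    · simp
    · rintro ⟨x, y'⟩ h
      simp at h
      obtain ⟨h, rfl⟩ := h
      exact ⟨x, by simpa using h, rfl⟩
  have h2 : (∑ y : V, (((univ.filter fun x : V => (x, y) ∈ E).card + 1 - a : ℕ) : ℝ) ^ a)
      ≤ Q.card * n ^ a := by
    have : (univ : Finset V).card = n := rfl
    rw [this] at h1
    exact_mod_cast h1
  obtain ⟨k, rfl⟩ : ∃ k, a = k + 1 := ⟨a - 1, by omega⟩
  set f : V → ℝ := fun y => (((univ.filter fun x : V => (x, y) ∈ E).card + 1 - (k + 1) : ℕ) : ℝ)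
    with hf
  have h3 : (∑ y : V, f y) ^ (k + 1) ≤ (n : ℝ) ^ k * ∑ y : V, f y ^ (k + 1) := by
    have := pow_sum_le_card_mul_sum_pow (s := (univ : Finset V)) (f := f)
      (fun y _ => Nat.cast_nonneg _) k
    exact this
  have h4 : (E.card : ℝ) / 2 ≤ ∑ y : V, f y := by
    have h5 : ∀ y ∈ (univ : Finset V),
        ((univ.filter fun x : V => (x, y) ∈ E).card : ℝ) ≤ f y + ((k + 1 : ℕ) : ℝ) := by
      intro y _
      simp only [hf]
      exact_mod_cast (by omega)
    have h6 := sum_le_sum h5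
    rw [sum_add_distrib, sum_const, nsmul_eq_mul, card_univ, ← hn, ← Nat.cast_sum, hsumE] at h6
    linarith
  have h7 : ((E.card : ℝ) / 2) ^ (k + 1) ≤ (n : ℝ) ^ k * (Q.card * n ^ (k + 1)) :=
    (pow_le_pow_left₀ (by positivity) h4 _).trans (h3.trans (by gcongr))
  have h8 : (n : ℝ) * (E.card / (n : ℝ) ^ 2 / 2) ^ (k + 1) =
      ((E.card : ℝ) / 2) ^ (k + 1) / ((n : ℝ) ^ k * n ^ (k + 1)) := by
    rw [div_div, div_pow, mul_pow, div_pow]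
    field_simp
    ring
  rw [h8, div_le_iff₀ (by positivity)]
  linarith

/-- The number of triangles (with multiplicity) on the edges of a complete bipartite block. -/
lemma block_le {V : Type*} [Fintype V] [DecidableEq V] {G : SimpleGraph V} [DecidableRel G.Adj]
    {s t : ℕ} (hs : 2 ≤ s) (h : K1stFree G s t) {T Q : Finset V}
    (hTQ : ∀ x ∈ T, ∀ y ∈ Q, G.Adj x y) {μ : ℝ} (hμ : 0 < μ) :
    (∑ p ∈ T ×ˢ Q, (codeg G p.1 p.2 : ℝ)) ≤
      Fintype.card V * T.card * t + s * (s * Fintype.card V) +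
        Q.card * (s * Fintype.card V) / μ + t * T.card * Q.card * μ ^ (s - 1) := by
  set n := Fintype.card V with hn
  set F : V → Finset V := fun x =>
    univ.filter fun v => G.Adj x v ∧ (T.filter (G.Adj v)).card < s with hF
  -- Vertices with at least `s` neighbours in `T` have fewer than `t` in `Q`: the term `n * t`.
  have h1 : ∀ x ∈ T, (∑ y ∈ Q, (codeg G x y : ℝ)) ≤ n * t +
      (s * (F x).card + Q.card * (F x).card / μ + t * Q.card * μ ^ (s - 1)) := by
    intro x hx
    have e1 : ∑ y ∈ Q, codeg G x y =
        ∑ v ∈ univ.filter (G.Adj x), (Q.filter (G.Adj v)).card := by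
      have := sum_card_bipartiteAbove_eq_sum_card_bipartiteBelow
        (s := Q) (t := univ.filter (G.Adj x)) (fun y v => G.Adj v y)
      simp only [bipartiteAbove, bipartiteBelow] at this
      rw [← this]
      refine sum_congr rfl fun y _ => ?_
      simp only [codeg, filter_filter]
      congr 1
      ext v
      simp [G.adj_comm]
    have e2 : ∑ v ∈ univ.filter (G.Adj x), (Q.filter (G.Adj v)).card ≤
        n * t + ∑ v ∈ F x, (Q.filter (G.Adj v)).card := by
      rw [← sum_filter_add_sum_filter_not (univ.filter (G.Adj x))
        (fun v => s ≤ (T.filter (G.Adj v)).card)]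
      refine add_le_add ?_ (le_of_eq ?_)
      · calc _ ≤ ∑ v ∈ (univ.filter (G.Adj x)).filter
              (fun v => s ≤ (T.filter (G.Adj v)).card), t := by
              refine sum_le_sum fun v hv => ?_
              refine (h.card_lt (v := v) (S := T.filter (G.Adj v)) (mem_filter.1 hv).2 ?_ ?_ ?_).le
              · exact fun y hy => (mem_filter.1 hy).2
              · exact fun y hy => (mem_filter.1 hy).2
              · exact fun y hy z hz => hTQ y (mem_filter.1 hy).1 z (mem_filter.1 hz).1
          _ ≤ n * t := by
              rw [sum_const, smul_eq_mul]
              gcongr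
              exact card_le_univ _
      · simp only [hF, filter_filter, not_le]
    have e3 := link_edges_le hs h (x := x) (F := F x) (Q := Q)
      (fun v hv => (mem_filter.1 hv).2.1) (fun y hy => hTQ x hx y hy) hμ
    have e4 : (∑ y ∈ Q, (codeg G x y : ℝ)) ≤
        n * t + ∑ v ∈ F x, ((Q.filter (G.Adj v)).card : ℝ) := by
      exact_mod_cast e1.le.trans e2
    linarith
  have h2 : ∑ x ∈ T, (F x).card ≤ s * n := by
    have := sum_card_bipartiteAbove_eq_sum_card_bipartiteBelow
        (s := T) (t := univ) (fun x v => G.Adj x v ∧ (T.filter (G.Adj v)).card < s)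
    simp only [bipartiteAbove, bipartiteBelow] at this
    rw [this]
    calc _ ≤ ∑ v : V, s := by
          refine sum_le_sum fun v _ => ?_
          by_cases hv : (T.filter (G.Adj v)).card < s
          · simp only [hv, and_true]
            simp only [G.adj_comm _ v]
            exact hv.le
          · simp [hv]
      _ = s * n := by simp [hn, mul_comm]
  have h2' : (∑ x ∈ T, ((F x).card : ℝ)) ≤ s * n := by exact_mod_cast h2
  rw [sum_product]
  calc (∑ x ∈ T, ∑ y ∈ Q, (codeg G x y : ℝ)) ≤ ∑ x ∈ T, (n * t +
      (s * (F x).card + Q.card * (F x).card / μ + t * Q.card * μ ^ (s - 1))) := sum_le_sum h1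
    _ = n * T.card * t + s * (∑ x ∈ T, ((F x).card : ℝ)) +
        Q.card * (∑ x ∈ T, ((F x).card : ℝ)) / μ + t * T.card * Q.card * μ ^ (s - 1) := by
        simp only [sum_add_distrib, sum_const, nsmul_eq_mul, ← mul_sum, ← sum_div]
        ring
    _ ≤ _ := by gcongr

/-! ### Codegree sums over sets of adjacent pairs -/

/-- The codegree sum over a set of adjacent pairs, from the link bound alone. -/
lemma sparse_le {V : Type*} [Fintype V] [DecidableEq V] {G : SimpleGraph V} [DecidableRel G.Adj]
    {s t : ℕ} (hs : 2 ≤ s) (h : K1stFree G s t) {E : Finset (V × V)}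
    (hE : ∀ p ∈ E, G.Adj p.1 p.2) {μ : ℝ} (hμ : 0 < μ) :
    (∑ p ∈ E, (codeg G p.1 p.2 : ℝ)) ≤
      s * E.card + Fintype.card V * E.card / μ + t * (Fintype.card V : ℝ) ^ 2 * μ ^ (s - 1) := by
  set n := Fintype.card V with hn
  set F : V → Finset V := fun x => univ.filter fun y => (x, y) ∈ E with hF
  have h0 : (∑ p ∈ E, (codeg G p.1 p.2 : ℝ)) = ∑ x : V, ∑ y ∈ F x, (codeg G x y : ℝ) :=
    sum_finset_product E univ F (by simp [hF])
  have hc : (E.card : ℝ) = ∑ x : V, ((F x).card : ℝ) := by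
    have := sum_finset_product E univ F (by simp [hF]) (f := fun _ => (1 : ℝ))
    simpa using this
  have h1 : ∀ x ∈ (univ : Finset V), (∑ y ∈ F x, (codeg G x y : ℝ)) ≤
      s * (F x).card + n * (F x).card / μ + t * n * μ ^ (s - 1) := by
    intro x _
    have e3 := link_edges_le hs h (x := x) (F := F x) (Q := univ.filter (G.Adj x))
      (fun v hv => hE (x, v) (mem_filter.1 hv).2) (fun y hy => (mem_filter.1 hy).2) hμ
    simp only [filter_filter] at e3
    have hcard : ((univ.filter (G.Adj x)).card : ℝ) ≤ n := by
      exact_mod_cast card_le_univ _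
    refine e3.trans ?_
    gcongr
  rw [h0]
  calc _ ≤ _ := sum_le_sum h1
    _ = s * (∑ x : V, ((F x).card : ℝ)) + n * (∑ x : V, ((F x).card : ℝ)) / μ +
        t * n ^ 2 * μ ^ (s - 1) := by
        simp only [sum_add_distrib, sum_const, nsmul_eq_mul, ← mul_sum, ← sum_div, card_univ,
          ← hn]
        ring
    _ = _ := by rw [hc]

/-- The side length `a` of the block extracted at density `p`. It is of order `√p L` rather than
`L / log (1 / p)`, which is smaller but still makes the potential argument work and keeps
`a * log (2 / p) ≤ L / 4`, because `√p * log (2 / p)` is bounded. -/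
lemma block_size {L p : ℝ} (hL : 16 ≤ L) (hL2 : Real.log (2 * L) ≤ L / 8)
    (hp : 1 / L < p) (hp1 : p ≤ 1) :
    ∃ a : ℕ, √p * L / 24 ≤ a ∧ 1 ≤ a ∧ (a : ℝ) ≤ L ∧ Real.exp (-(L / 4)) ≤ (p / 2) ^ a := by
  have hL0 : 0 < L := by linarith
  have hp0 : 0 < p := lt_trans (by positivity) hp
  have hsq1 : √p ≤ 1 := by
    rw [Real.sqrt_le_one]; exact hp1
  have hsq0 : 0 < √p := Real.sqrt_pos.2 hp0
  have hceil : (⌈√p * L / 24⌉₊ : ℝ) < √p * L / 24 + 1 := Nat.ceil_lt_add_one (by positivity)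
  refine ⟨⌈√p * L / 24⌉₊, Nat.le_ceil _, Nat.one_le_ceil_iff.2 (by positivity), ?_, ?_⟩
  · nlinarith
  set a := ⌈√p * L / 24⌉₊
  have hlog0 : 0 ≤ Real.log (2 / p) := Real.log_nonneg (by rw [le_div_iff₀ hp0]; linarith)
  have h1 : Real.log (2 / p) ≤ L / 8 := by
    refine le_trans (Real.log_le_log (by positivity) ?_) hL2
    rw [div_le_iff₀ hp0]
    rw [div_lt_iff₀ hL0] at hp
    nlinarith
  have h2 : √p * Real.log (2 / p) ≤ 3 := by
    have e1 : Real.log (2 / p) ≤ 2 * √(2 / p) := by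
      have := Real.log_le_sub_one_of_pos (Real.sqrt_pos.2 (show 0 < 2 / p by positivity))
      rw [Real.log_sqrt (by positivity)] at this
      linarith
    have e2 : √p * √(2 / p) = √2 := by
      rw [← Real.sqrt_mul hp0.le]
      congr 1
      field_simp
    have e3 : √2 ≤ 3 / 2 := by
      rw [Real.sqrt_le_left (by norm_num)]; norm_num
    nlinarith
  have h3 : (a : ℝ) * Real.log (2 / p) ≤ L / 4 := by
    have : (a : ℝ) * Real.log (2 / p) ≤ (√p * L / 24 + 1) * Real.log (2 / p) := by gcongr
    nlinarith
  have h4 : p / 2 = Real.exp (-Real.log (2 / p)) := by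
    rw [← Real.log_inv, Real.exp_log (by positivity)]; simp
  rw [h4, ← Real.exp_nat_mul]
  apply Real.exp_le_exp.2
  linarith

/-- The codegree sum over any set `E` of adjacent pairs, by induction on `|E|`: sparse sets are
handled by `sparse_le`; from a dense one a block is removed, and its cost is covered by
the decrease of the term containing `√|E|`. -/
lemma weight_le {V : Type*} [Fintype V] [DecidableEq V] [Nonempty V] {G : SimpleGraph V}
    [DecidableRel G.Adj] {s t : ℕ} (hs : 2 ≤ s) (h : K1stFree G s t) {L μ : ℝ}
    (hL : 16 ≤ L) (hL2 : Real.log (2 * L) ≤ L / 8) (hn : (Fintype.card V : ℝ) = Real.exp L)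
    (hLn : 2 * L ^ 2 ≤ Fintype.card V) (hμ : 0 < μ) (hμs : μ ^ s * L = Fintype.card V)
    (hM : Real.exp (L / 4) ≤ μ ^ (s - 1)) (E : Finset (V × V))
    (hE : ∀ p ∈ E, G.Adj p.1 p.2) :
    (∑ p ∈ E, (codeg G p.1 p.2 : ℝ)) ≤
      (s + 1 + t) * μ ^ (s - 1) * (Fintype.card V : ℝ) ^ 2 +
      48 * (2 * t + s ^ 2 + s) * μ ^ (s - 1) * Fintype.card V * √E.card := by
  induction hN : E.card using Nat.strong_induction_on generalizing E with
  | _ N ih =>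
  set n : ℝ := (Fintype.card V : ℝ) with hndef
  set M : ℝ := μ ^ (s - 1) with hMdef
  have hL0 : 0 < L := by linarith
  have hn0 : 0 < n := hn ▸ Real.exp_pos _
  have hM1 : 1 ≤ M := le_trans (Real.one_le_exp (by linarith)) hM
  have hnM : n = L * M * μ := by
    rw [← hμs, hMdef]
    obtain ⟨k, rfl⟩ : ∃ k, s = k + 1 := ⟨s - 1, by omega⟩
    simp only [Nat.add_sub_cancel]
    ring
  have hNn : (N : ℝ) ≤ n ^ 2 := by
    have : E.card ≤ Fintype.card V * Fintype.card V := by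
      simpa [Fintype.card_prod] using card_le_univ E
    rw [sq, ← hN, hndef]; exact_mod_cast this
  rcases le_or_gt (N : ℝ) (n ^ 2 / L) with hsmall | hbig
  · have h1 := sparse_le hs h hE hμ
    rw [hN, ← hndef, ← hMdef] at h1
    have h2 : n * N / μ ≤ n ^ 2 * M := by
      rw [div_le_iff₀ hμ]
      calc n * N ≤ n * (n ^ 2 / L) := by gcongr
        _ = n ^ 2 * M * μ := by rw [hnM]; field_simp
    have h3 : (s : ℝ) * N ≤ s * (n ^ 2 * M) := by
      gcongr
      nlinarith
    have h4 : 0 ≤ 48 * (2 * t + s ^ 2 + s) * M * n * √N := by positivity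
    nlinarith
  · have hp1 : (N : ℝ) / n ^ 2 ≤ 1 := by rw [div_le_one (by positivity)]; exact hNn
    have hp : 1 / L < (N : ℝ) / n ^ 2 := by
      rw [div_lt_div_iff₀ hL0 (by positivity)]
      rw [div_lt_iff₀ hL0] at hbig
      linarith
    obtain ⟨a, ha, ha1, haL, hpow⟩ := block_size hL hL2 hp hp1
    have hN0 : (0 : ℝ) < N := lt_trans (by positivity) hbig
    have hcond : 2 * (a : ℝ) * n ≤ N := by
      refine le_trans ?_ hbig.le
      rw [le_div_iff₀ hL0]
      calc 2 * (a : ℝ) * n * L ≤ 2 * L * n * L := by gcongr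
        _ = n * (2 * L ^ 2) := by ring
        _ ≤ n * n := by gcongr
        _ = n ^ 2 := by ring
    obtain ⟨T, Q, hT, hTQ, hQ⟩ := exists_block E a ha1 (by rw [hN]; exact hcond)
    rw [hN, ← hndef] at hQ
    have hQM : n ≤ Q.card * M := by
      calc n = n * Real.exp (-(L / 4)) * Real.exp (L / 4) := by
            rw [mul_assoc, ← Real.exp_add]; simp
        _ ≤ n * (N / n ^ 2 / 2) ^ a * M := by gcongr
        _ ≤ _ := by gcongr
    have hQ0 : 0 < (Q.card : ℝ) := by
      by_contra! hq
      nlinarith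
    have hB := block_le hs h (T := T) (Q := Q)
      (fun x hx y hy => hE (x, y) (hTQ (mem_product.2 ⟨hx, hy⟩))) hμ
    rw [hT, ← hndef, ← hMdef] at hB
    have hBlock : (∑ p ∈ T ×ˢ Q, (codeg G p.1 p.2 : ℝ)) ≤
        (2 * t + s ^ 2 + s) * (Q.card * L * M) := by
      have b1 : n * a * t ≤ t * (Q.card * L * M) := by
        calc n * a * t ≤ (Q.card * M) * L * t := by gcongr
          _ = _ := by ring
      have b2 : (s : ℝ) * (s * n) ≤ s ^ 2 * (Q.card * L * M) := by
        calc (s : ℝ) * (s * n) ≤ s * (s * (Q.card * M)) := by gcongr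
          _ = s ^ 2 * (Q.card * 1 * M) := by ring
          _ ≤ _ := by gcongr; linarith
      have b3 : Q.card * (s * n) / μ = s * (Q.card * L * M) := by
        rw [hnM]; field_simp
      have b4 : t * a * Q.card * M ≤ t * (Q.card * L * M) := by
        calc (t : ℝ) * a * Q.card * M ≤ t * L * Q.card * M := by gcongr
          _ = _ := by ring
      rw [b3] at hB
      linarith
    have hcard : (E \ (T ×ˢ Q)).card + a * Q.card = N := by
      have := card_sdiff_add_card_eq_card hTQ
      rwa [card_product, hT, hN] at this
    have hQ0' : 0 < Q.card := by exact_mod_cast hQ0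
    have hlt : (E \ (T ×ˢ Q)).card < N := by
      have : 0 < a * Q.card := Nat.mul_pos ha1 hQ0'
      omega
    have hI := ih _ hlt (E \ (T ×ˢ Q)) (fun p hp => hE p (mem_sdiff.1 hp).1) rfl
    rw [← sum_sdiff hTQ]
    set N' := (E \ (T ×ˢ Q)).card
    have hcard' : (N' : ℝ) + a * Q.card = N := by exact_mod_cast hcard
    have hsN : 0 < √(N : ℝ) := Real.sqrt_pos.2 hN0
    -- The tangent line bound for `√` at `N`, from the concavity of the square root.
    have hsqrt : (a : ℝ) * Q.card ≤ 2 * √(N : ℝ) * (√(N : ℝ) - √(N' : ℝ)) := by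
      have e1 := Real.sq_sqrt hN0.le
      have e2 := Real.sq_sqrt (Nat.cast_nonneg N' : (0 : ℝ) ≤ N')
      have e3 : 2 * √(N : ℝ) * (√(N : ℝ) - √(N' : ℝ)) =
          √(N : ℝ) ^ 2 - √(N' : ℝ) ^ 2 + (√(N : ℝ) - √(N' : ℝ)) ^ 2 := by ring
      rw [e3, e1, e2]
      linarith only [hcard', sq_nonneg (√(N : ℝ) - √(N' : ℝ))]
    have hpa : √(N : ℝ) * L ≤ 24 * (a * n) := by
      rw [Real.sqrt_div hN0.le, Real.sqrt_sq hn0.le] at ha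
      have e1 : √(N : ℝ) / n * L / 24 = √(N : ℝ) * L / (24 * n) := by field_simp
      rw [e1, div_le_iff₀ (by positivity)] at ha
      linarith only [ha]
    have hfin : Q.card * L ≤ 48 * n * (√(N : ℝ) - √(N' : ℝ)) := by
      refine le_of_mul_le_mul_left ?_ hsN
      calc √(N : ℝ) * (Q.card * L) = Q.card * (√(N : ℝ) * L) := by ring
        _ ≤ Q.card * (24 * (a * n)) := by gcongr
        _ = 24 * n * (a * Q.card) := by ring
        _ ≤ 24 * n * (2 * √(N : ℝ) * (√(N : ℝ) - √(N' : ℝ))) := by gcongr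
        _ = _ := by ring
    have hK : (2 * t + s ^ 2 + s) * (Q.card * L * M) ≤
        (2 * t + s ^ 2 + s) * M * (48 * n * (√(N : ℝ) - √(N' : ℝ))) := by
      calc _ = (2 * t + s ^ 2 + s) * M * (Q.card * L) := by ring
        _ ≤ _ := by gcongr
    linarith only [hK, hI, hBlock]

/-! ### From codegree sums to triangles -/

lemma ncard_triangles_le {V : Type*} [Fintype V] [DecidableEq V] (G : SimpleGraph V)
    [DecidableRel G.Adj] :
    {T : Finset V | G.IsNClique 3 T}.ncard ≤
      ∑ p ∈ (univ : Finset (V × V)).filter (fun p => G.Adj p.1 p.2), codeg G p.1 p.2 := by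
  set D := ((univ : Finset (V × V)).filter (fun p => G.Adj p.1 p.2)).sigma
    (fun p => univ.filter fun v => G.Adj p.1 v ∧ G.Adj p.2 v) with hD
  have hDc : D.card = ∑ p ∈ (univ : Finset (V × V)).filter (fun p => G.Adj p.1 p.2),
      codeg G p.1 p.2 := card_sigma _ _
  rw [← hDc]
  refine le_trans (Set.ncard_le_ncard (t := ↑(D.image fun q => ({q.1.1, q.1.2, q.2} : Finset V)))
    ?_ (Finset.finite_toSet _)) ?_
  · intro T hT
    obtain ⟨a, b, c, hab, hac, hbc, rfl⟩ := SimpleGraph.is3Clique_iff.1 hT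
    rw [mem_coe, mem_image]
    exact ⟨⟨(a, b), c⟩, by simp [hD, hab, hac, hbc], rfl⟩
  · rw [Set.ncard_coe_finset]
    exact card_image_le

lemma eventually_large : ∃ n₀ : ℕ, ∀ n : ℕ, n₀ ≤ n → 16 ≤ Real.log n ∧
    Real.log (2 * Real.log n) ≤ Real.log n / 8 ∧ 2 * Real.log n ^ 2 ≤ n := by
  have hlog : Filter.Tendsto (fun n : ℕ => Real.log n) Filter.atTop Filter.atTop :=
    Real.tendsto_log_atTop.comp tendsto_natCast_atTop_atTop
  have h1 : ∀ᶠ n : ℕ in Filter.atTop, 16 ≤ Real.log n := hlog.eventually_ge_atTop 16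
  have h2 : ∀ᶠ n : ℕ in Filter.atTop, Real.log (2 * Real.log n) ≤ Real.log n / 8 := by
    have e1 := (Real.isLittleO_log_id_atTop.bound (show (0 : ℝ) < 1 / 16 by norm_num))
    have e2 := (hlog.const_mul_atTop (show (0 : ℝ) < 2 by norm_num)).eventually e1
    filter_upwards [e2, h1] with n hn hn1
    have := (le_abs_self _).trans hn
    simp only [id, Real.norm_eq_abs] at this
    rw [abs_of_nonneg (by linarith)] at this
    linarith
  have h3 : ∀ᶠ n : ℕ in Filter.atTop, 2 * Real.log n ^ 2 ≤ n := by
    have e1 := ((Real.isLittleO_pow_log_id_atTop (n := 2)).bound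
      (show (0 : ℝ) < 1 / 2 by norm_num))
    filter_upwards [tendsto_natCast_atTop_atTop.eventually e1] with n hn
    have := (le_abs_self _).trans hn
    simp only [id, Real.norm_eq_abs, Nat.abs_cast] at this
    linarith
  obtain ⟨n₀, hn₀⟩ := Filter.eventually_atTop.1 (h1.and (h2.and h3))
  exact ⟨n₀, hn₀⟩

theorem stmt0 (s t : ℕ) (hs : 2 ≤ s) (hst : s ≤ t) :
    ∃ C : ℝ, 0 < C ∧ ∀ (n : ℕ), 2 ≤ n →
      ∀ (V : Type) [Fintype V] (G : SimpleGraph V), Fintype.card V = n →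
        K1stFree G s t →
        ({T : Finset V | G.IsNClique 3 T}.ncard : ℝ) ≤
          C * (n : ℝ) ^ ((3 : ℝ) - 1 / s) * (Real.log n) ^ (-1 + 1 / (s : ℝ)) := by
  obtain ⟨n₀, hn₀⟩ := eventually_large
  set K : ℝ := (s + 1 + t) + 48 * (2 * t + s ^ 2 + s) with hK
  have hK0 : 0 < K := by positivity
  refine ⟨K + (n₀ : ℝ) ^ 3, by positivity, ?_⟩
  intro n hn V _ G hV hfree
  classical
  have hs0 : (0 : ℝ) < s := by exact_mod_cast (by omega : 0 < s)
  have hs2 : (2 : ℝ) ≤ s := by exact_mod_cast hs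
  have hnR : (2 : ℝ) ≤ n := by exact_mod_cast hn
  have hn0 : (0 : ℝ) < n := by linarith
  set L := Real.log n with hLdef
  have hL0 : 0 < L := Real.log_pos (by linarith)
  have hLn : L ≤ n := (Real.log_le_sub_one_of_pos hn0).trans (by linarith)
  set μ : ℝ := (n / L) ^ (1 / (s : ℝ)) with hμ
  have hq1 : 1 ≤ n / L := by rwa [one_le_div hL0]
  have hμ1 : 1 ≤ μ := Real.one_le_rpow hq1 (by positivity)
  have hμs : μ ^ s * L = n := by
    rw [hμ, ← Real.rpow_natCast, ← Real.rpow_mul (by positivity),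
      one_div_mul_cancel hs0.ne', Real.rpow_one]
    field_simp
  have hMeq : μ ^ (s - 1) = (n / L) ^ (1 - 1 / (s : ℝ)) := by
    rw [hμ, ← Real.rpow_natCast, ← Real.rpow_mul (by positivity)]
    congr 1
    rw [Nat.cast_sub (by omega)]
    field_simp
    simp
  have htarget : (n : ℝ) ^ ((3 : ℝ) - 1 / s) * L ^ (-1 + 1 / (s : ℝ)) =
      μ ^ (s - 1) * (n : ℝ) ^ 2 := by
    rw [hMeq, Real.div_rpow hn0.le hL0.le, div_eq_mul_inv ((n : ℝ) ^ _),
      ← Real.rpow_neg hL0.le, show (3 : ℝ) - 1 / s = (1 - 1 / s) + 2 by ring, Real.rpow_add hn0,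
      show (-1 + 1 / (s : ℝ)) = -(1 - 1 / s) by ring]
    norm_cast
    ring
  rw [mul_assoc, htarget]
  have hM1 : 1 ≤ μ ^ (s - 1) := one_le_pow₀ hμ1
  set E := (univ : Finset (V × V)).filter (fun p => G.Adj p.1 p.2) with hE
  have hEc : E.card ≤ n * n := by
    simpa [Fintype.card_prod, hV] using card_le_univ E
  have htri : ({T : Finset V | G.IsNClique 3 T}.ncard : ℝ) ≤
      ∑ p ∈ E, (codeg G p.1 p.2 : ℝ) := by
    exact_mod_cast ncard_triangles_le G
  refine htri.trans ?_
  rcases lt_or_ge n n₀ with hlt | hge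
  · have h1 : ∑ p ∈ E, codeg G p.1 p.2 ≤ n ^ 3 := by
      calc ∑ p ∈ E, codeg G p.1 p.2 ≤ ∑ p ∈ E, n :=
            sum_le_sum fun p _ => hV ▸ card_le_univ _
        _ = E.card * n := by rw [sum_const, smul_eq_mul]
        _ ≤ n * n * n := by gcongr
        _ = n ^ 3 := by ring
    have h2 : (∑ p ∈ E, (codeg G p.1 p.2 : ℝ)) ≤ (n : ℝ) ^ 3 := by exact_mod_cast h1
    have h3 : (n : ℝ) ^ 3 ≤ (n₀ : ℝ) ^ 3 := by
      gcongr
    have h4 : 1 ≤ μ ^ (s - 1) * (n : ℝ) ^ 2 := by nlinarith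
    have h5 : (0 : ℝ) ≤ (n₀ : ℝ) ^ 3 := by positivity
    nlinarith
  · obtain ⟨h16, hlog, hsq⟩ := hn₀ n hge
    have : Nonempty V := Fintype.card_pos_iff.1 (by omega)
    have hexp : Real.exp L = n := Real.exp_log hn0
    have hM : Real.exp (L / 4) ≤ μ ^ (s - 1) := by
      have e1 : Real.exp (L / 2) ≤ n / L := by
        rw [le_div_iff₀ hL0]
        have e2 : L ≤ Real.exp (L / 2) := by
          refine le_of_sq_le_sq ?_ (Real.exp_pos _).le
          rw [← Real.exp_nat_mul]
          rw [show ((2 : ℕ) : ℝ) * (L / 2) = L by push_cast; ring, hexp]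
          nlinarith
        calc Real.exp (L / 2) * L ≤ Real.exp (L / 2) * Real.exp (L / 2) := by gcongr
          _ = n := by rw [← Real.exp_add, add_halves, hexp]
      have e3 : (1 / 2 : ℝ) ≤ 1 - 1 / s := by
        have : 1 / (s : ℝ) ≤ 1 / 2 := one_div_le_one_div_of_le (by norm_num) hs2
        linarith
      calc Real.exp (L / 4) = Real.exp (L / 2) ^ (1 / 2 : ℝ) := by
            rw [← Real.exp_mul]; ring_nf
        _ ≤ (n / L) ^ (1 / 2 : ℝ) := by gcongr
        _ ≤ (n / L) ^ (1 - 1 / (s : ℝ)) := Real.rpow_le_rpow_of_exponent_le hq1 e3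
        _ = _ := hMeq.symm
    have hw := weight_le hs hfree h16 hlog (by rw [hV, hexp]) (by rw [hV]; exact hsq)
      (by linarith) (by rw [hV]; exact hμs) hM E (by simp [hE])
    rw [hV] at hw
    refine hw.trans ?_
    have hsE : √(E.card : ℝ) ≤ n := by
      rw [Real.sqrt_le_left hn0.le, sq]
      exact_mod_cast hEc
    calc _ ≤ (s + 1 + t) * μ ^ (s - 1) * (n : ℝ) ^ 2 +
          48 * (2 * t + s ^ 2 + s) * μ ^ (s - 1) * n * n := by gcongr
      _ = K * (μ ^ (s - 1) * (n : ℝ) ^ 2) := by rw [hK]; ring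
      _ ≤ _ := by gcongr; linarith [show (0 : ℝ) ≤ (n₀ : ℝ) ^ 3 by positivity]
end

section
/- Let s and t be integers with 2 ≤ s ≤ t. There exists a constant C > 0 (depending only on s and t) such that for every integer n ≥ 2, every K_{1,s,t}-free simple graph G on n vertices, and every subset P of the vertex set of G with |P| ≤ log n / log 8, the number of ordered triples (a, b, c) of pairwise adjacent vertices of G with a ∈ P is at most C · n^{2 - 1/s} · (log n)^{1/s}. -/
open Finset

namespace TriangleCount

/-! ### Traces on `P` and common neighbourhoods -/

open scoped Classical in
/-- The trace `N(b) ∩ P` of the vertex `b` on the set `P`. -/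
noncomputable def trace {V : Type} (G : SimpleGraph V) (P : Finset V) (b : V) : Finset V :=
  P.filter (fun a => G.Adj a b)

open scoped Classical in
lemma mem_trace {V : Type} {G : SimpleGraph V} {P : Finset V} {a b : V} :
    a ∈ trace G P b ↔ a ∈ P ∧ G.Adj a b := by
  simp [trace]

lemma trace_subset {V : Type} (G : SimpleGraph V) (P : Finset V) (b : V) :
    trace G P b ⊆ P := fun _ h => (mem_trace.1 h).1

open scoped Classical in
lemma card_common_le {V : Type} [Fintype V] {G : SimpleGraph V} {s t : ℕ}
    (hG : K1stFree G s t) (v : V) (S : Finset V) (hS : S.card = s) (hv : ∀ x ∈ S, G.Adj v x) :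
    (univ.filter (fun c => G.Adj v c ∧ ∀ x ∈ S, G.Adj x c)).card ≤ t := by
  by_contra! h
  obtain ⟨T, hT, hTc⟩ := exists_subset_card_eq h.le
  have hT' : ∀ y ∈ T, G.Adj v y ∧ ∀ x ∈ S, G.Adj x y := fun y hy => by
    simpa using hT hy
  refine hG ⟨v, S, T, ?_, fun h => (hv v h).ne rfl, fun h => (hT' v h).1.ne rfl, hS, hTc, hv,
    fun y hy => (hT' y hy).1, fun x hx y hy => (hT' y hy).2 x hx⟩
  rw [disjoint_left]
  intro x hx hx'
  exact ((hT' x hx').2 x hx).ne rfl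

open scoped Classical in
/-- Double counting of pairs `(c, S)` with `S` an `s`-subset of `F c`. -/
lemma sum_choose_eq {V : Type} (U W : Finset V) (F : V → Finset V) (s : ℕ)
    (hF : ∀ c ∈ U, F c ⊆ W) :
    ∑ c ∈ U, (F c).card.choose s
      = ∑ S ∈ W.powersetCard s, (U.filter (fun c => S ⊆ F c)).card := by
  simp_rw [card_filter]
  rw [sum_comm]
  refine sum_congr rfl fun c hc => ?_
  rw [← card_powersetCard, ← card_filter]
  congr 1
  ext S
  simp only [mem_powersetCard, mem_filter]
  constructor
  · rintro ⟨h, h'⟩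
    exact ⟨⟨h.trans (hF c hc), h'⟩, h⟩
  · rintro ⟨⟨_, h'⟩, h⟩
    exact ⟨h, h'⟩

lemma le_add_choose (s : ℕ) (hs : 1 ≤ s) (d : ℕ) : d ≤ s + d.choose s := by
  induction d with
  | zero => simp
  | succ d ih =>
    obtain ⟨k, rfl⟩ : ∃ k, s = k + 1 := ⟨s - 1, by omega⟩
    rw [Nat.choose_succ_succ']
    by_cases h : k ≤ d
    · have := Nat.choose_pos h
      omega
    · omega

open scoped Classical in
/-- Edges at `b` whose ends share at least `s` neighbours in `P` contribute only `t * 2 ^ |P|`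
beyond weight `s` per edge, as `s`-subsets of the trace of `b` have few common neighbours in `N(b)`. -/
lemma sum_trace_inter_le {V : Type} [Fintype V] {G : SimpleGraph V} {s t : ℕ} (hs : 2 ≤ s)
    (hG : K1stFree G s t) (P : Finset V) (b : V) :
    ∑ c ∈ univ.filter (fun c => G.Adj b c), (trace G P b ∩ trace G P c).card
      ≤ s * (univ.filter (fun c => G.Adj b c ∧ (trace G P b ∩ trace G P c).Nonempty)).card
        + t * 2 ^ P.card := by
  have h1 : ∑ c ∈ univ.filter (fun c => G.Adj b c), (trace G P b ∩ trace G P c).card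
      ≤ ∑ c ∈ univ.filter (fun c => G.Adj b c),
        ((if (trace G P b ∩ trace G P c).Nonempty then s else 0)
          + (trace G P b ∩ trace G P c).card.choose s) := by
    refine sum_le_sum fun c _ => ?_
    split_ifs with h
    · exact le_add_choose s (by omega) _
    · rw [not_nonempty_iff_eq_empty] at h
      simp [h]
  refine h1.trans ?_
  rw [sum_add_distrib]
  refine add_le_add (le_of_eq ?_) ?_
  · rw [← sum_filter, filter_filter, sum_const, smul_eq_mul, mul_comm]
  · rw [sum_choose_eq _ P _ _ (fun c _ => inter_subset_left.trans (trace_subset G P b))]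
    calc _ ≤ ∑ S ∈ P.powersetCard s, t := by
          refine sum_le_sum fun S hS => ?_
          rw [mem_powersetCard] at hS
          by_cases hb : S ⊆ trace G P b
          · refine le_trans (card_le_card ?_) (card_common_le hG b S hS.2
              (fun x hx => (mem_trace.1 (hb hx)).2.symm))
            intro c hc
            simp only [mem_filter, mem_univ, true_and] at hc ⊢
            exact ⟨hc.1, fun x hx => (mem_trace.1 (mem_inter.1 (hc.2 hx)).2).2⟩
          · rw [filter_false_of_mem]
            · simp
            · exact fun c _ h => hb (h.trans inter_subset_left)
      _ ≤ t * 2 ^ P.card := by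
          rw [sum_const, smul_eq_mul, mul_comm, card_powersetCard]
          exact Nat.mul_le_mul_left _ (Nat.choose_le_two_pow _ _)

/-! ### Classes of vertices with equal trace -/

open scoped Classical in
/-- The vertices whose trace on `P` is exactly `B`. -/
noncomputable def traceClass {V : Type} [Fintype V] (G : SimpleGraph V) (P B : Finset V) :
    Finset V :=
  univ.filter (fun b => trace G P b = B)

open scoped Classical in
/-- The neighbours of `c` in the class of trace `B`, provided that `B` meets the trace of `c`;
empty otherwise. -/
noncomputable def classNbrs {V : Type} [Fintype V] (G : SimpleGraph V) (P B : Finset V) (c : V) :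
    Finset V :=
  (traceClass G P B).filter (fun b => G.Adj b c ∧ (B ∩ trace G P c).Nonempty)

open scoped Classical in
lemma sum_choose_class_le {V : Type} [Fintype V] {G : SimpleGraph V} {s t : ℕ} (hs : 2 ≤ s)
    (hG : K1stFree G s t) (P B : Finset V) (hB : B ⊆ P) :
    ∑ c, (classNbrs G P B c).card.choose s
      ≤ (traceClass G P B).card.choose s * (P.card * t) := by
  rw [sum_choose_eq _ (traceClass G P B) (classNbrs G P B) _
    (fun c _ => filter_subset _ _)]
  rw [← card_powersetCard, ← smul_eq_mul]
  refine sum_le_card_nsmul _ _ _ fun S hS => ?_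
  rw [mem_powersetCard] at hS
  have hSB : ∀ x ∈ S, trace G P x = B := fun x hx => by
    simpa [traceClass] using hS.1 hx
  calc _ ≤ (B.biUnion fun a =>
        univ.filter (fun c => G.Adj a c ∧ ∀ x ∈ S, G.Adj x c)).card := by
        refine card_le_card ?_
        intro c hc
        simp only [mem_filter, mem_univ, true_and, mem_biUnion] at hc ⊢
        have hadj : ∀ x ∈ S, G.Adj x c ∧ (B ∩ trace G P c).Nonempty := fun x hx =>
          (mem_filter.1 (hc hx)).2
        obtain ⟨x, hx⟩ : S.Nonempty := card_pos.1 (by omega)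
        obtain ⟨a, ha⟩ := (hadj x hx).2
        rw [mem_inter] at ha
        exact ⟨a, ha.1, (mem_trace.1 ha.2).2, fun x hx => (hadj x hx).1⟩
    _ ≤ B.card * t := by
        refine card_biUnion_le_card_mul _ _ _ fun a ha => ?_
        refine card_common_le hG a S hS.2 fun x hx => ?_
        rw [← hSB x hx] at ha
        exact (mem_trace.1 ha).2
    _ ≤ P.card * t := Nat.mul_le_mul_right _ (card_le_card hB)

open scoped Classical in
lemma sum_meeting_eq {V : Type} [Fintype V] (G : SimpleGraph V) (P : Finset V) :
    ∑ b, (univ.filter (fun c => G.Adj b c ∧ (trace G P b ∩ trace G P c).Nonempty)).card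
      = ∑ B ∈ P.powerset, ∑ c, (classNbrs G P B c).card := by
  rw [← sum_fiberwise_of_maps_to (s := univ) (t := P.powerset) (g := trace G P)
    (fun b _ => mem_powerset.2 (trace_subset G P b))]
  refine sum_congr rfl fun B _ => ?_
  simp_rw [classNbrs, card_filter]
  rw [sum_comm]
  refine sum_congr rfl fun c _ => ?_
  unfold traceClass
  refine sum_congr rfl fun b hb => ?_
  rw [mem_filter] at hb
  rw [hb.2]

open scoped Classical in
lemma triples_eq {V : Type} [Fintype V] (G : SimpleGraph V) (P : Finset V) :
    {p : V × V × V | p.1 ∈ P ∧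
      G.Adj p.1 p.2.1 ∧ G.Adj p.2.1 p.2.2 ∧ G.Adj p.2.2 p.1}.ncard
      = ∑ b, ∑ c ∈ univ.filter (fun c => G.Adj b c), (trace G P b ∩ trace G P c).card := by
  rw [Set.ncard_eq_toFinset_card', Set.toFinset_ofPred, card_filter, Fintype.sum_prod_type,
    sum_comm, Fintype.sum_prod_type]
  refine sum_congr rfl fun b _ => ?_
  rw [sum_filter]
  refine sum_congr rfl fun c _ => ?_
  rw [← card_filter]
  split_ifs with h
  · congr 1
    ext a
    simp only [mem_filter, mem_univ, true_and, mem_inter, mem_trace]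
    have := G.adj_comm a c
    tauto
  · simp [h]

/-! ### The convexity estimate and the combined bound -/

/-- The truncation step of the convexity argument, replacing Hölder's inequality. -/
lemma le_add_pow_div (s : ℕ) (hs : 1 ≤ s) (y τ : ℝ) (hy : 0 ≤ y) (hτ : 0 < τ) :
    y ≤ τ + y ^ s / τ ^ (s - 1) := by
  rcases le_total y τ with h | h
  · have : 0 ≤ y ^ s / τ ^ (s - 1) := by positivity
    linarith
  · have : y ≤ y ^ s / τ ^ (s - 1) := by
      rw [le_div_iff₀ (by positivity)]
      obtain ⟨k, rfl⟩ : ∃ k, s = k + 1 := ⟨s - 1, by omega⟩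
      rw [pow_succ, Nat.add_sub_cancel, mul_comm]
      gcongr
    linarith

/-- The Kővári–Sós–Turán estimate: `x c` are degrees into a set of size `m` whose `s`-subsets
have at most `k` common neighbours on average, and `r` is any positive number with
`r ^ s ≥ k / (t * n)`, where `n` is the number of vertices. -/
lemma sum_le_of_sum_choose_le {V : Type} [Fintype V] (s m : ℕ) (hs : 1 ≤ s) (x : V → ℕ)
    (hxm : ∀ c, x c ≤ m) (k : ℕ) (hx : ∑ c, (x c).choose s ≤ m.choose s * k)
    (t r : ℝ) (hr : 0 < r) (hk : (k : ℝ) ≤ t * (Fintype.card V * r ^ s)) :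
    ((∑ c, x c : ℕ) : ℝ) ≤ s * Fintype.card V + (1 + t) * (Fintype.card V * r * m) := by
  rcases Nat.eq_zero_or_pos m with rfl | hm
  · have : ∀ c, x c = 0 := fun c => Nat.le_zero.1 (hxm c)
    simp only [this]
    simp
    positivity
  have hm' : (0 : ℝ) < m := by exact_mod_cast hm
  have hpow : ∑ c, (x c + 1 - s) ^ s ≤ m ^ s * k := by
    calc ∑ c, (x c + 1 - s) ^ s ≤ ∑ c, (x c).descFactorial s :=
          sum_le_sum fun c _ => Nat.pow_sub_le_descFactorial _ _
      _ = s.factorial * ∑ c, (x c).choose s := by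
          rw [mul_sum]
          exact sum_congr rfl fun c _ => Nat.descFactorial_eq_factorial_mul_choose _ _
      _ ≤ s.factorial * (m.choose s * k) := Nat.mul_le_mul_left _ hx
      _ = m.descFactorial s * k := by
          rw [Nat.descFactorial_eq_factorial_mul_choose, mul_assoc]
      _ ≤ m ^ s * k := Nat.mul_le_mul_right _ (Nat.descFactorial_le_pow _ _)
  have hpow' : ∑ c, ((x c + 1 - s : ℕ) : ℝ) ^ s ≤ (m : ℝ) ^ s * k := by exact_mod_cast hpow
  -- truncate the shifted degrees at height `m * r`
  have hτ : (0 : ℝ) < m * r := by positivity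
  push_cast
  calc ∑ c, (x c : ℝ)
      ≤ ∑ c, ((s : ℝ) + (m * r + ((x c + 1 - s : ℕ) : ℝ) ^ s / (m * r) ^ (s - 1))) := by
        refine sum_le_sum fun c _ => ?_
        have h1 := le_add_pow_div s hs ((x c + 1 - s : ℕ) : ℝ) (m * r) (Nat.cast_nonneg _) hτ
        have h2 : (x c : ℝ) ≤ s + ((x c + 1 - s : ℕ) : ℝ) := by
          exact_mod_cast (by omega : x c ≤ s + (x c + 1 - s))
        linarith
    _ = s * Fintype.card V + Fintype.card V * r * m
          + (∑ c, ((x c + 1 - s : ℕ) : ℝ) ^ s) / (m * r) ^ (s - 1) := by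
        rw [sum_add_distrib, sum_add_distrib, sum_div]
        simp
        ring
    _ ≤ s * Fintype.card V + Fintype.card V * r * m + t * (Fintype.card V * r * m) := by
        gcongr
        rw [div_le_iff₀ (by positivity)]
        refine hpow'.trans ((mul_le_mul_of_nonneg_left hk (by positivity)).trans (le_of_eq ?_))
        obtain ⟨j, rfl⟩ : ∃ j, s = j + 1 := ⟨s - 1, by omega⟩
        rw [Nat.add_sub_cancel, mul_pow]
        ring
    _ = _ := by ring

/-- The combinatorial bound, with `r` standing for `(log n / n) ^ (1 / s)`. -/
lemma triples_le {V : Type} [Fintype V] {G : SimpleGraph V} {s t : ℕ} (hs : 2 ≤ s)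
    (hG : K1stFree G s t) (P : Finset V) (r : ℝ) (hr : 0 < r)
    (hP : (P.card : ℝ) ≤ Fintype.card V * r ^ s) :
    ({p : V × V × V | p.1 ∈ P ∧
      G.Adj p.1 p.2.1 ∧ G.Adj p.2.1 p.2.2 ∧ G.Adj p.2.2 p.1}.ncard : ℝ)
      ≤ (s ^ 2 + t) * (Fintype.card V * 2 ^ P.card)
        + s * (1 + t) * (Fintype.card V ^ 2 * r) := by
  classical
  set N := ∑ B ∈ P.powerset, ∑ c, (classNbrs G P B c).card with hN
  have h1 : {p : V × V × V | p.1 ∈ P ∧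
      G.Adj p.1 p.2.1 ∧ G.Adj p.2.1 p.2.2 ∧ G.Adj p.2.2 p.1}.ncard
      ≤ s * N + Fintype.card V * (t * 2 ^ P.card) := by
    rw [triples_eq]
    refine (sum_le_sum fun b _ => sum_trace_inter_le hs hG P b).trans (le_of_eq ?_)
    rw [sum_add_distrib, ← mul_sum, sum_meeting_eq]
    simp [hN]
  have hm : ∑ B ∈ P.powerset, ((traceClass G P B).card : ℝ) = Fintype.card V := by
    have := card_eq_sum_card_fiberwise (s := univ) (t := P.powerset) (f := trace G P)
      (fun b _ => by simpa using trace_subset G P b)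
    rw [← card_univ, this]
    push_cast
    rfl
  have h2 : (N : ℝ) ≤ s * Fintype.card V * 2 ^ P.card
      + (1 + t) * (Fintype.card V ^ 2 * r) := by
    rw [hN, Nat.cast_sum]
    calc _ ≤ ∑ B ∈ P.powerset, ((s : ℝ) * Fintype.card V
          + (1 + t) * (Fintype.card V * r * (traceClass G P B).card)) := by
          refine sum_le_sum fun B hB => ?_
          refine sum_le_of_sum_choose_le s _ (by omega) _
            (fun c => card_le_card (filter_subset _ _)) (P.card * t)
            (sum_choose_class_le hs hG P B (mem_powerset.1 hB)) t r hr ?_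
          push_cast
          rw [mul_comm]
          gcongr
      _ = _ := by
          rw [sum_add_distrib, ← mul_sum, ← mul_sum, ← mul_sum, hm]
          simp [card_powerset]
          ring
  have h1' : ({p : V × V × V | p.1 ∈ P ∧
      G.Adj p.1 p.2.1 ∧ G.Adj p.2.1 p.2.2 ∧ G.Adj p.2.2 p.1}.ncard : ℝ)
      ≤ s * N + Fintype.card V * (t * 2 ^ P.card) := by exact_mod_cast h1
  have h3 := mul_le_mul_of_nonneg_left h2 (Nat.cast_nonneg (α := ℝ) s)
  calc _ ≤ _ := h1'
    _ ≤ _ := add_le_add_left h3 _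
    _ = _ := by ring

lemma two_pow_le (n L : ℕ) (hn : 2 ≤ n) (hL : (L : ℝ) ≤ Real.log n / Real.log 8) :
    (2 : ℝ) ^ L ≤ (n : ℝ) ^ ((1 : ℝ) / 3) := by
  have hn0 : (0 : ℝ) < n := by positivity
  have h8 : Real.log 8 = 3 * Real.log 2 := by
    rw [show (8 : ℝ) = 2 ^ 3 by norm_num, Real.log_pow]
    norm_num
  have h2 : 0 < Real.log 2 := Real.log_pos (by norm_num)
  rw [← Real.rpow_natCast, Real.rpow_def_of_pos (by norm_num), Real.rpow_def_of_pos hn0,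
    Real.exp_le_exp]
  rw [h8, le_div_iff₀ (by positivity)] at hL
  linarith

end TriangleCount

open TriangleCount in
theorem stmt1 (s t : ℕ) (hs : 2 ≤ s) (hst : s ≤ t) :
    ∃ C : ℝ, 0 < C ∧ ∀ (n : ℕ), 2 ≤ n →
      ∀ (V : Type) [Fintype V] (G : SimpleGraph V), Fintype.card V = n →
        K1stFree G s t →
        ∀ P : Finset V, (P.card : ℝ) ≤ Real.log n / Real.log 8 →
          ({p : V × V × V | p.1 ∈ P ∧
              G.Adj p.1 p.2.1 ∧ G.Adj p.2.1 p.2.2 ∧ G.Adj p.2.2 p.1}.ncard : ℝ) ≤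
            C * (n : ℝ) ^ ((2 : ℝ) - 1 / s) * (Real.log n) ^ ((1 : ℝ) / s) := by
  refine ⟨2 * (s ^ 2 + t) + s * (1 + t), by positivity, ?_⟩
  intro n hn V _ G hV hG P hP
  have hn0 : (0 : ℝ) < n := by positivity
  have hn1 : (1 : ℝ) ≤ n := by exact_mod_cast (by omega : 1 ≤ n)
  have hs0 : (s : ℝ) ≠ 0 := by positivity
  have hs2 : (1 : ℝ) / s ≤ 1 / 2 := by
    apply one_div_le_one_div_of_le (by norm_num)
    exact_mod_cast hs
  have hlog : (1 : ℝ) / 2 ≤ Real.log n := by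
    have h1 := Real.log_two_gt_d9
    have h2 : Real.log 2 ≤ Real.log n := Real.log_le_log (by norm_num) (by exact_mod_cast hn)
    linarith
  have hlog0 : 0 < Real.log n := by linarith
  have hlog8 : 1 ≤ Real.log 8 := by
    rw [show (8 : ℝ) = 2 ^ 3 by norm_num, Real.log_pow]
    have h1 := Real.log_two_gt_d9
    push_cast
    linarith
  set r : ℝ := (Real.log n / n) ^ ((1 : ℝ) / s) with hr
  have hr0 : 0 < r := by positivity
  have hrs : (n : ℝ) * r ^ s = Real.log n := by
    rw [hr, ← Real.rpow_natCast, ← Real.rpow_mul (by positivity), one_div_mul_cancel hs0,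
      Real.rpow_one]
    field_simp
  have hX : (n : ℝ) ^ 2 * r = (n : ℝ) ^ ((2 : ℝ) - 1 / s) * (Real.log n) ^ ((1 : ℝ) / s) := by
    rw [hr, Real.div_rpow hlog0.le hn0.le, Real.rpow_sub hn0, Real.rpow_two]
    ring
  have hmain := triples_le hs hG P r hr0 (by
    rw [hV, hrs]
    exact hP.trans (div_le_self hlog0.le hlog8))
  rw [hV] at hmain
  have hlow : (n : ℝ) * 2 ^ P.card ≤ 2 * ((n : ℝ) ^ 2 * r) := by
    have h1 : (1 : ℝ) / 2 ≤ (Real.log n) ^ ((1 : ℝ) / s) := by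
      calc (1 : ℝ) / 2 = (1 / 2) ^ (1 : ℝ) := by rw [Real.rpow_one]
        _ ≤ (1 / 2) ^ ((1 : ℝ) / s) :=
            Real.rpow_le_rpow_of_exponent_ge (by norm_num) (by norm_num) (by linarith)
        _ ≤ _ := Real.rpow_le_rpow (by norm_num) hlog (by positivity)
    have h2 : (n : ℝ) * 2 ^ P.card ≤ (n : ℝ) ^ ((2 : ℝ) - 1 / s) := by
      calc (n : ℝ) * 2 ^ P.card ≤ n * (n : ℝ) ^ ((1 : ℝ) / 3) :=
            mul_le_mul_of_nonneg_left (two_pow_le n _ hn hP) hn0.le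
        _ = (n : ℝ) ^ ((1 : ℝ) + 1 / 3) := by rw [Real.rpow_add hn0, Real.rpow_one]
        _ ≤ _ := Real.rpow_le_rpow_of_exponent_le hn1 (by linarith)
    rw [hX]
    have h3 := mul_le_mul_of_nonneg_left h1
      (by positivity : (0 : ℝ) ≤ (n : ℝ) ^ ((2 : ℝ) - 1 / s))
    linarith
  rw [mul_assoc, ← hX]
  have h4 := mul_le_mul_of_nonneg_left hlow (by positivity : (0 : ℝ) ≤ (s : ℝ) ^ 2 + t)
  calc _ ≤ _ := hmain
    _ ≤ _ := add_le_add_left h4 _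
    _ = _ := by ring
end

section
/- Let s and t be integers with 2 ≤ s ≤ t. There exists a constant C > 0 (depending only on s and t) such that the following holds for every integer n ≥ 2. Let G be a K_{1,s,t}-free simple graph on n vertices, let P be a subset of its vertex set with |P| ≤ log n, let S ⊆ P, and let V_S denote the set of vertices v of G whose neighborhood satisfies Γ(v) ∩ P = S. Then the number of ordered triples (a, b, c) of pairwise adjacent vertices of G with a ∈ P and b ∈ V_S is at most C · (n^{1 - 1/s} · (log n)^{1/s} · |V_S| + n · log n). -/
open Finset

/-- The form in which `K1stFree` is used. Disjointness of `Q` and `R`, and `v` lying outside both,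
need not be assumed: adjacency forces them. -/
lemma card_lt_of_K1stFree {V : Type*} {G : SimpleGraph V} {s t : ℕ} (hG : K1stFree G s t)
    (v : V) (Q R : Finset V) (hQ : s ≤ Q.card) (hvQ : ∀ x ∈ Q, G.Adj v x)
    (hvR : ∀ y ∈ R, G.Adj v y) (hQR : ∀ x ∈ Q, ∀ y ∈ R, G.Adj x y) : R.card < t := by
  by_contra! hR
  obtain ⟨Q', hQ', hQc⟩ := Finset.exists_subset_card_eq hQ
  obtain ⟨R', hR', hRc⟩ := Finset.exists_subset_card_eq hR
  refine hG ⟨v, Q', R', ?_, ?_, ?_, hQc, hRc, fun x hx => hvQ x (hQ' hx),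
    fun y hy => hvR y (hR' hy), fun x hx y hy => hQR x (hQ' hx) y (hR' hy)⟩
  · rw [Finset.disjoint_left]
    exact fun x hx hx' => (hQR x (hQ' hx) x (hR' hx')).ne rfl
  · exact fun h => (hvQ v (hQ' h)).ne rfl
  · exact fun h => (hvR v (hR' h)).ne rfl

open Classical in
lemma degV_lt_of_le_degS {V : Type*} {G : SimpleGraph V} {s t : ℕ}
    (hG : K1stFree G s t) (S W : Finset V) (hSW : ∀ a ∈ S, ∀ b ∈ W, G.Adj a b) (c : V)
    (hc : s ≤ (S.filter (G.Adj c)).card) : (W.filter (G.Adj c)).card < t := by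
  refine card_lt_of_K1stFree hG c _ _ hc ?_ ?_ ?_
  · simp
  · simp
  · intro x hx y hy
    exact hSW x (mem_filter.1 hx).1 y (mem_filter.1 hy).1

open Classical in
/-- Double counting of pairs `(c, Q)`, where `Q` is an `s`-set of neighbours of `c` in `W` and `c`
has a neighbour in `S`. -/
lemma sum_choose_le {V : Type*} [Fintype V] {G : SimpleGraph V} {s t : ℕ}
    (hG : K1stFree G s t) (S W : Finset V) (hSW : ∀ a ∈ S, ∀ b ∈ W, G.Adj a b) :
    ∑ c with 1 ≤ (S.filter (G.Adj c)).card, ((W.filter (G.Adj c)).card).choose s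
      ≤ W.card.choose s * (S.card * t) := by
  set X : Finset V := {c | 1 ≤ (S.filter (G.Adj c)).card} with hX
  let r : V → Finset V → Prop := fun c Q => ∀ b ∈ Q, G.Adj c b
  have h1 : ∀ c ∈ X, ((W.filter (G.Adj c)).card).choose s
      = ((W.powersetCard s).bipartiteAbove r c).card := by
    intro c _
    rw [← Finset.card_powersetCard]
    congr 1
    ext Q
    simp only [mem_powersetCard, mem_bipartiteAbove, r, subset_iff, mem_filter]
    grind
  rw [Finset.sum_congr rfl h1, Finset.sum_card_bipartiteAbove_eq_sum_card_bipartiteBelow,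
    ← Finset.card_powersetCard, ← smul_eq_mul]
  refine Finset.sum_le_card_nsmul _ _ _ fun Q hQ => ?_
  obtain ⟨hQW, hQs⟩ := mem_powersetCard.1 hQ
  have hsub : X.bipartiteBelow r Q ⊆
      S.biUnion fun a => ({c | G.Adj c a ∧ ∀ b ∈ Q, G.Adj c b} : Finset V) := by
    intro c hc
    obtain ⟨hcX, hcQ⟩ := (mem_bipartiteBelow r).1 hc
    obtain ⟨a, ha⟩ := Finset.card_pos.1 (mem_filter.1 hcX).2
    obtain ⟨haS, hca⟩ := mem_filter.1 ha
    simp only [mem_biUnion, mem_filter, mem_univ, true_and]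
    exact ⟨a, haS, hca, hcQ⟩
  refine (Finset.card_le_card hsub).trans (Finset.card_biUnion_le_card_mul _ _ _ fun a ha => ?_)
  refine (card_lt_of_K1stFree hG a Q _ hQs.ge (fun x hx => hSW a ha x (hQW hx)) ?_ ?_).le
  · intro y hy
    exact (mem_filter.1 hy).2.1.symm
  · intro x hx y hy
    exact ((mem_filter.1 hy).2.2 x hx).symm

/-- The convexity step: an upper bound `K * L * m ^ s` on the sum of the binomials
`(f c choose s)` bounds the sum of the `f c`. -/
lemma sum_le_of_sum_choose {ι : Type*} (X : Finset ι) (f : ι → ℕ) (s : ℕ) (hs : 1 ≤ s)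
    (n m L K : ℝ) (hn : 0 < n) (hm : 0 < m) (hL : 0 < L) (hXn : (X.card : ℝ) ≤ n)
    (h : (∑ c ∈ X, ((f c).choose s : ℝ)) ≤ K * L * m ^ s) :
    (∑ c ∈ X, (f c : ℝ)) ≤
      s * n + (1 + s.factorial * K) * (n ^ ((1 : ℝ) - 1 / s) * L ^ ((1 : ℝ) / s) * m) := by
  have hs0 : (s : ℝ) ≠ 0 := by positivity
  set D : ℝ := (L / n) ^ ((1 : ℝ) / s) * m with hD
  have hDpos : 0 < D := by positivity
  have hDs : D ^ s = L / n * m ^ s := by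
    rw [hD, mul_pow, ← Real.rpow_natCast, ← Real.rpow_mul (by positivity), one_div,
      inv_mul_cancel₀ hs0, Real.rpow_one]
  have hnD : n ^ ((1 : ℝ) - 1 / s) * L ^ ((1 : ℝ) / s) * m = n * D := by
    rw [hD, Real.div_rpow hL.le hn.le, Real.rpow_sub hn, Real.rpow_one]
    ring
  have hpt : ∀ c ∈ X, (f c : ℝ) ≤ (s + D) + s.factorial * ((f c).choose s : ℝ) * (D / D ^ s) := by
    intro c _
    set e : ℕ := f c + 1 - s with he
    have h1 : (f c : ℝ) ≤ s + e := by
      have : f c ≤ s + e := by omega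
      exact_mod_cast this
    have h2 : (e : ℝ) ^ s ≤ s.factorial * ((f c).choose s : ℝ) := by
      have := Nat.pow_sub_le_descFactorial (f c) s
      rw [Nat.descFactorial_eq_factorial_mul_choose] at this
      exact_mod_cast this
    have h3 : (e : ℝ) ≤ D + (e : ℝ) ^ s * (D / D ^ s) := by
      rcases le_total (e : ℝ) D with h | h
      · have : 0 ≤ (e : ℝ) ^ s * (D / D ^ s) := by positivity
        linarith
      · obtain ⟨k, rfl⟩ : ∃ k, s = k + 1 := ⟨s - 1, by omega⟩
        have hk : D ^ k ≤ (e : ℝ) ^ k := pow_le_pow_left₀ hDpos.le h k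
        have : (e : ℝ) ≤ (e : ℝ) ^ (k + 1) * (D / D ^ (k + 1)) := by
          rw [← mul_div_assoc, le_div_iff₀ (by positivity), pow_succ, pow_succ]
          have := mul_le_mul_of_nonneg_left hk (by positivity : 0 ≤ (e : ℝ) * D)
          linarith
        linarith
    have h4 : (e : ℝ) ^ s * (D / D ^ s) ≤ s.factorial * ((f c).choose s : ℝ) * (D / D ^ s) :=
      mul_le_mul_of_nonneg_right h2 (by positivity)
    linarith
  have hsum := Finset.sum_le_sum hpt
  rw [Finset.sum_add_distrib, ← Finset.sum_mul, ← Finset.mul_sum, Finset.sum_const,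
    nsmul_eq_mul] at hsum
  have h5 : (X.card : ℝ) * (s + D) ≤ n * (s + D) :=
    mul_le_mul_of_nonneg_right hXn (by positivity)
  have h6 : s.factorial * (∑ c ∈ X, ((f c).choose s : ℝ)) * (D / D ^ s) ≤
      s.factorial * (K * L * m ^ s) * (D / D ^ s) := by gcongr
  have h7 : s.factorial * (K * L * m ^ s) * (D / D ^ s) = s.factorial * K * (n * D) := by
    rw [hDs]
    field_simp
  rw [hnD]
  linarith

theorem stmt2 (s t : ℕ) (hs : 2 ≤ s) (hst : s ≤ t) :
    ∃ C : ℝ, 0 < C ∧ ∀ (n : ℕ), 2 ≤ n →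
      ∀ (V : Type) [Fintype V] (G : SimpleGraph V), Fintype.card V = n →
        K1stFree G s t →
        ∀ P S : Finset V, (P.card : ℝ) ≤ Real.log n → S ⊆ P →
          ∀ VS : Set V, VS = {v : V | G.neighborSet v ∩ ↑P = ↑S} →
          ({p : V × V × V | p.1 ∈ P ∧ p.2.1 ∈ VS ∧
              G.Adj p.1 p.2.1 ∧ G.Adj p.2.1 p.2.2 ∧ G.Adj p.2.2 p.1}.ncard : ℝ) ≤
            C * ((n : ℝ) ^ ((1 : ℝ) - 1 / s) * (Real.log n) ^ ((1 : ℝ) / s) * VS.ncard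
              + n * Real.log n) := by
  classical
  -- `2 * s * s` absorbs the term `s * s * n`, through `1 ≤ 2 * log n`.
  refine ⟨t + 2 * s * s + s * (1 + s.factorial * t), by positivity, ?_⟩
  intro n hn V _ G hV hG P S hP hSP VS hVS
  set L := Real.log n with hLdef
  have hn' : (2 : ℝ) ≤ n := by exact_mod_cast hn
  have hL : 1 / 2 ≤ L := by
    have h1 := Real.log_two_gt_d9
    have h2 := Real.log_le_log (by norm_num) hn'
    linarith
  set W : Finset V := VS.toFinset with hW
  have hWm : ∀ v, v ∈ W ↔ G.neighborSet v ∩ ↑P = ↑S := by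
    intro v
    rw [hW, Set.mem_toFinset, hVS]
    rfl
  have hadj : ∀ v ∈ W, ∀ a ∈ P, (G.Adj v a ↔ a ∈ S) := by
    intro v hv a ha
    have := Set.ext_iff.1 ((hWm v).1 hv) a
    simpa [ha] using this
  have hSW : ∀ a ∈ S, ∀ b ∈ W, G.Adj a b := fun a ha b hb =>
    ((hadj b hb a (hSP ha)).2 ha).symm
  have hVSc : VS.ncard = W.card := Set.ncard_eq_toFinset_card' VS
  set dS : V → ℕ := fun c => (S.filter (G.Adj c)).card with hdS
  set dV : V → ℕ := fun c => (W.filter (G.Adj c)).card with hdV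
  have hcount : {p : V × V × V | p.1 ∈ P ∧ p.2.1 ∈ VS ∧
      G.Adj p.1 p.2.1 ∧ G.Adj p.2.1 p.2.2 ∧ G.Adj p.2.2 p.1}.ncard ≤ ∑ c, dS c * dV c := by
    have hsub : {p : V × V × V | p.1 ∈ P ∧ p.2.1 ∈ VS ∧
        G.Adj p.1 p.2.1 ∧ G.Adj p.2.1 p.2.2 ∧ G.Adj p.2.2 p.1} ⊆
        ((univ.biUnion fun c => ((S.filter (G.Adj c)) ×ˢ (W.filter (G.Adj c))).image
          fun q : V × V => (q.1, q.2, c) : Finset (V × V × V)) : Set (V × V × V)) := by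
      rintro ⟨a, b, c⟩ ⟨ha, hb, hab, hbc, hca⟩
      have hbW : b ∈ W := by rw [hW, Set.mem_toFinset]; exact hb
      have haS : a ∈ S := (hadj b hbW a ha).1 hab.symm
      simp only [coe_biUnion, coe_univ, Set.mem_iUnion, mem_coe, mem_image, mem_product,
        mem_filter]
      exact ⟨c, Set.mem_univ c, (a, b), ⟨⟨haS, hca⟩, hbW, hbc.symm⟩, rfl⟩
    refine (Set.ncard_le_ncard hsub (Finset.finite_toSet _)).trans ?_
    rw [Set.ncard_coe_finset]
    refine Finset.card_biUnion_le.trans (Finset.sum_le_sum fun c _ => ?_)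
    exact Finset.card_image_le.trans (Finset.card_product _ _).le
  have hSL : (S.card : ℝ) ≤ L := le_trans (by exact_mod_cast Finset.card_le_card hSP) hP
  set X : Finset V := {c | 1 ≤ dS c} with hX
  have hsplit : ∑ c, dS c * dV c ≤ n * (S.card * t) + s * ∑ c ∈ X, dV c := by
    have hpt : ∀ c ∈ (univ : Finset V),
        dS c * dV c ≤ S.card * t + (if 1 ≤ dS c then s * dV c else 0) := by
      intro c _
      rcases le_or_gt s (dS c) with h | h
      · have h1 : dV c < t := degV_lt_of_le_degS hG S W hSW c h
        have h2 : dS c ≤ S.card := Finset.card_filter_le _ _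
        exact (Nat.mul_le_mul h2 h1.le).trans (Nat.le_add_right _ _)
      · split_ifs with h0
        · exact (Nat.mul_le_mul_right _ h.le).trans (Nat.le_add_left _ _)
        · have : dS c = 0 := by omega
          simp [this]
    refine (Finset.sum_le_sum hpt).trans (le_of_eq ?_)
    rw [Finset.sum_add_distrib, Finset.sum_const, ← Finset.sum_filter, ← Finset.mul_sum,
      Finset.card_univ, hV, smul_eq_mul]
  have hT : ({p : V × V × V | p.1 ∈ P ∧ p.2.1 ∈ VS ∧
      G.Adj p.1 p.2.1 ∧ G.Adj p.2.1 p.2.2 ∧ G.Adj p.2.2 p.1}.ncard : ℝ) ≤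
      n * (S.card * t) + s * ∑ c ∈ X, (dV c : ℝ) := by
    exact_mod_cast hcount.trans hsplit
  set A : ℝ := (n : ℝ) ^ ((1 : ℝ) - 1 / s) * L ^ ((1 : ℝ) / s) * VS.ncard with hA
  have hA0 : 0 ≤ A := by positivity
  have hXsum : ∑ c ∈ X, (dV c : ℝ) ≤ s * n + (1 + s.factorial * t) * A := by
    rcases Nat.eq_zero_or_pos W.card with h0 | h0
    · have : ∀ c ∈ X, (dV c : ℝ) = 0 := by
        intro c _
        have : dV c ≤ W.card := Finset.card_filter_le _ _
        have : dV c = 0 := by omega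
        exact_mod_cast this
      rw [Finset.sum_congr rfl this, Finset.sum_const_zero]
      positivity
    · rw [hA, hVSc]
      refine sum_le_of_sum_choose X dV s (by omega) n W.card L t (by positivity)
        (by exact_mod_cast h0) (by linarith) ?_ ?_
      · rw [← hV]
        exact_mod_cast Finset.card_le_univ X
      · have h1 := sum_choose_le hG S W hSW
        have h2 : (∑ c ∈ X, ((dV c).choose s : ℝ)) ≤ (W.card.choose s : ℝ) * (S.card * t) := by
          exact_mod_cast h1
        have h3 : (W.card.choose s : ℝ) ≤ (W.card : ℝ) ^ s := by
          exact_mod_cast Nat.choose_le_pow W.card s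
        calc _ ≤ _ := h2
          _ ≤ (W.card : ℝ) ^ s * (L * t) := by gcongr
          _ = _ := by ring
  have h1 : (n : ℝ) * (S.card * t) ≤ n * (L * t) := by gcongr
  have h2 : (s : ℝ) * ∑ c ∈ X, (dV c : ℝ) ≤ s * (s * n + (1 + s.factorial * t) * A) := by gcongr
  have h3 : (s : ℝ) * s * n ≤ s * s * n * (2 * L) :=
    le_mul_of_one_le_right (by positivity) (by linarith)
  have h4 : 0 ≤ ((t : ℝ) + 2 * s * s) * A := by positivity
  have h5 : 0 ≤ (s : ℝ) * (1 + s.factorial * t) * (n * L) := by positivity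
  linarith
end

section
/- There exists a constant c > 0 such that for every integer n ≥ 4 there is a K_{1,2,2}-free simple graph on n vertices containing at least c · n² triangles. In particular, the graph obtained from a complete bipartite graph with parts of sizes as equal as possible by adding a maximum matching inside one of the parts is K_{1,2,2}-free and has Ω(n²) triangles. -/
/-- The graph on `Fin n` obtained from the complete bipartite graph with parts
`{i : i < n / 2}` and `{i : n / 2 ≤ i}` (whose sizes are as equal as possible)
by adding a maximum matching inside the first part, pairing `2k` with `2k + 1`. -/
def halfGraph (n : ℕ) : SimpleGraph (Fin n) :=
  SimpleGraph.fromRel (fun i j =>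
    ((i : ℕ) < n / 2 ∧ ¬ ((j : ℕ) < n / 2)) ∨
    ((i : ℕ) < n / 2 ∧ (j : ℕ) < n / 2 ∧ (i : ℕ) / 2 = (j : ℕ) / 2))

lemma halfGraph_adj {n : ℕ} (i j : Fin n) : (halfGraph n).Adj i j ↔
    (i : ℕ) ≠ j ∧ (((i : ℕ) < n / 2 ∧ n / 2 ≤ (j : ℕ)) ∨ ((j : ℕ) < n / 2 ∧ n / 2 ≤ (i : ℕ)) ∨
      ((i : ℕ) < n / 2 ∧ (j : ℕ) < n / 2 ∧ (i : ℕ) / 2 = (j : ℕ) / 2)) := by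
  simp only [halfGraph, SimpleGraph.fromRel_adj, ne_eq, Fin.ext_iff]
  omega

lemma halfGraph_free (n : ℕ) : K1stFree (halfGraph n) 2 2 := by
  rintro ⟨v, S, T, -, -, -, hS, hT, hvS, hvT, hST⟩
  obtain ⟨a, b, hab, rfl⟩ := Finset.card_eq_two.mp hS
  obtain ⟨c, d, hcd, rfl⟩ := Finset.card_eq_two.mp hT
  simp only [Finset.mem_insert, Finset.mem_singleton, forall_eq_or_imp, forall_eq,
    halfGraph_adj] at hvS hvT hST
  rw [ne_eq, Fin.ext_iff] at hab hcd
  omega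

/-- The triangle `{2k, 2k + 1, n / 2 + r}` of `halfGraph n`. -/
def triangle (n : ℕ) (p : Fin (n / 4) × Fin (n - n / 2)) : Finset (Fin n) :=
  {⟨2 * p.1, by omega⟩, ⟨2 * p.1 + 1, by omega⟩, ⟨n / 2 + p.2, by omega⟩}

lemma triangle_isNClique (n : ℕ) (p : Fin (n / 4) × Fin (n - n / 2)) :
    (halfGraph n).IsNClique 3 (triangle n p) := by
  have h := p.1.isLt
  rw [triangle, SimpleGraph.is3Clique_triple_iff]
  simp only [halfGraph_adj]
  omega

lemma triangle_injective (n : ℕ) : Function.Injective (triangle n) := by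
  rintro ⟨k, r⟩ ⟨k', r'⟩ h
  have hk := k.isLt
  have hk' := k'.isLt
  have h₁ : (⟨2 * k, by omega⟩ : Fin n) ∈ triangle n (k', r') := by
    rw [← h]; simp [triangle]
  have h₂ : (⟨n / 2 + r, by omega⟩ : Fin n) ∈ triangle n (k', r') := by
    rw [← h]; simp [triangle]
  simp only [triangle, Finset.mem_insert, Finset.mem_singleton, Fin.ext_iff] at h₁ h₂
  simp only [Prod.mk.injEq, Fin.ext_iff]
  omega

lemma card_triangles_ge (n : ℕ) :
    n / 4 * (n - n / 2) ≤ {T : Finset (Fin n) | (halfGraph n).IsNClique 3 T}.ncard := by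
  have h : Set.range (triangle n) ⊆ {T | (halfGraph n).IsNClique 3 T} := by
    rintro _ ⟨p, rfl⟩
    exact triangle_isNClique n p
  have hcard : (Set.range (triangle n)).ncard = n / 4 * (n - n / 2) := by
    rw [← Set.image_univ, Set.ncard_image_of_injective _ (triangle_injective n), Set.ncard_univ]
    simp
  exact hcard ▸ Set.ncard_le_ncard h (Set.toFinite _)

lemma sq_le_card_triangles {n : ℕ} (hn : 4 ≤ n) : (1 / 16 : ℝ) * (n : ℝ) ^ 2 ≤
    ({T : Finset (Fin n) | (halfGraph n).IsNClique 3 T}.ncard : ℝ) := by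
  have h := card_triangles_ge n
  have h₁ : n ≤ 8 * (n / 4) := by omega
  have h₂ : n ≤ 2 * (n - n / 2) := by omega
  have h₃ : n ^ 2 ≤ 16 * {T : Finset (Fin n) | (halfGraph n).IsNClique 3 T}.ncard := by
    have := Nat.mul_le_mul h₁ h₂
    nlinarith
  have h₄ : (n : ℝ) ^ 2 ≤
      16 * ({T : Finset (Fin n) | (halfGraph n).IsNClique 3 T}.ncard : ℝ) := by
    exact_mod_cast h₃
  linarith

theorem stmt9 : ∃ c : ℝ, 0 < c ∧ ∀ n : ℕ, 4 ≤ n →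
    (∃ (V : Type) (_ : Fintype V) (G : SimpleGraph V),
        Nat.card V = n ∧ K1stFree G 2 2 ∧
        c * (n : ℝ) ^ 2 ≤ ({T : Finset V | G.IsNClique 3 T}.ncard : ℝ)) ∧
    K1stFree (halfGraph n) 2 2 ∧
    c * (n : ℝ) ^ 2 ≤
      ({T : Finset (Fin n) | (halfGraph n).IsNClique 3 T}.ncard : ℝ) := by
  exact ⟨1 / 16, by norm_num, fun n hn => ⟨⟨Fin n, inferInstance, halfGraph n, by simp,
    halfGraph_free n, sq_le_card_triangles hn⟩, halfGraph_free n, sq_le_card_triangles hn⟩⟩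
end
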